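/- Let T be a rooted tree on the vertex set of a flow graph G. If T has the parent property and there exists a low-high order of T on G, then T has the sibling property, and hence T is the dominator tree of G. -/

import Mathlib

variable {V : Type*}

/-- `IsWalk A u v p`: `p` is a path from `u` to `v` in the digraph with arc
relation `A`, listing all of its vertices in order. -/
def IsWalk (A : V → V → Prop) (u v : V) (p : List V) : Prop :=
  p.Chain' A ∧ p.head? = some u ∧ p.getLast? = some v

/-- A flow graph: a directed graph with arc relation `A` and start vertex `s`
such that every vertex is reachable from `s` and no arc enters `s`. -/
structure FlowGraph (V : Type*) where
  A : V → V → Prop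
  s : V
  reach : ∀ v : V, ∃ p : List V, IsWalk A s v p
  no_enter : ∀ v : V, ¬ A v s

/-- `DomOn A s v w`: `v` lies on every path from `s` to `w` in the digraph with
arc relation `A`. -/
def DomOn (A : V → V → Prop) (s v w : V) : Prop :=
  ∀ p : List V, IsWalk A s w p → v ∈ p

/-- `v` dominates `w` in the flow graph `G`. -/
def FlowGraph.Dom (G : FlowGraph V) (v w : V) : Prop :=
  DomOn G.A G.s v w

/-- A rooted tree on vertex set `V`, given by a parent function: the root is a
fixed point of the parent function, and iterating the parent function from any
vertex eventually reaches the root. -/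
structure ParentTree (V : Type*) where
  parent : V → V
  root : V
  parent_root : parent root = root
  reaches_root : ∀ v : V, ∃ n : ℕ, parent^[n] v = root

/-- `T.Anc x y`: `x` is an ancestor of `y` in the rooted tree `T` (every vertex
is an ancestor of itself). -/
def ParentTree.Anc (T : ParentTree V) (x y : V) : Prop :=
  ∃ n : ℕ, T.parent^[n] y = x

/-- `T` has the parent property with respect to `G`: for every arc `(v, w)`,
the parent of `w` is an ancestor of `v` in `T`. -/
def ParentProperty (G : FlowGraph V) (T : ParentTree V) : Prop :=
  ∀ v w : V, G.A v w → T.Anc (T.parent w) v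

/-- The sibling property with respect to an arbitrary arc relation `A` with
start vertex `s`: no non-root vertex dominates a distinct vertex with the same
parent. -/
def SiblingPropertyOn (A : V → V → Prop) (s : V) (T : ParentTree V) : Prop :=
  ∀ v w : V, v ≠ T.root → w ≠ T.root → v ≠ w → T.parent v = T.parent w →
    ¬ DomOn A s v w

/-- `T` has the sibling property with respect to the flow graph `G`. -/
def SiblingProperty (G : FlowGraph V) (T : ParentTree V) : Prop :=
  SiblingPropertyOn G.A G.s T

/-- `T` is the dominator tree of the digraph with arc relation `A` and start
vertex `s`: `T` is rooted at `s`, and the parent of every vertex `v ≠ s` is its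
immediate dominator, i.e. a strict dominator of `v` that is dominated by every
strict dominator of `v`. -/
def IsDomTreeOn (A : V → V → Prop) (s : V) (T : ParentTree V) : Prop :=
  T.root = s ∧ ∀ v : V, v ≠ s →
    DomOn A s (T.parent v) v ∧ T.parent v ≠ v ∧
    ∀ u : V, DomOn A s u v → u ≠ v → DomOn A s u (T.parent v)

/-- `T` is the dominator tree of the flow graph `G`. -/
def IsDomTree (G : FlowGraph V) (T : ParentTree V) : Prop :=
  IsDomTreeOn G.A G.s T

/-- `ord` is (the numbering of) a preorder of the rooted tree `T`: an injective
numbering of the vertices such that for every vertex `v` the descendants of `v`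
are ordered consecutively, with `v` first. -/
def IsTreePreorder (T : ParentTree V) (ord : V → ℕ) : Prop :=
  Function.Injective ord ∧
  (∀ v x : V, T.Anc v x → ord v ≤ ord x) ∧
  (∀ v x y z : V, T.Anc v x → T.Anc v z → ord x ≤ ord y → ord y ≤ ord z →
    T.Anc v y)

/-- A preorder `ord` of `T` is low-high on the digraph with arc relation `A`
and start vertex `s`: for every `v ≠ s`, either `(t(v), v)` is an arc, or there
are arcs `(u, v)` and `(w, v)` with `u < v < w` in the order and `w` not a
descendant of `v` in `T`. -/
def LowHighOn (A : V → V → Prop) (s : V) (T : ParentTree V) (ord : V → ℕ) :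
    Prop :=
  IsTreePreorder T ord ∧
  ∀ v : V, v ≠ s → (A (T.parent v) v ∨
    ∃ u w : V, A u v ∧ A w v ∧ ord u < ord v ∧ ord v < ord w ∧ ¬ T.Anc v w)

/-- A low-high order of `T` on the flow graph `G`. -/
def LowHigh (G : FlowGraph V) (T : ParentTree V) (ord : V → ℕ) : Prop :=
  LowHighOn G.A G.s T ord

/-- `B` is (the arc relation of) a spanning tree of `G` rooted at `s`: a
subgraph of `G` in which no arc enters `s`, every vertex other than `s` has
exactly one entering arc, and every vertex is reachable from `s`. -/
def IsSpanningTree (G : FlowGraph V) (B : V → V → Prop) : Prop :=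
  (∀ u v : V, B u v → G.A u v) ∧
  (∀ v : V, ¬ B v G.s) ∧
  (∀ v : V, v ≠ G.s → ∃! u : V, B u v) ∧
  (∀ v : V, ∃ p : List V, IsWalk B G.s v p)

/-- Spanning trees `B` and `R` of `G` rooted at `s` are independent: for every
vertex `v`, the paths from `s` to `v` in `B` and in `R` have in common only
dominators of `v`. -/
def Independent (G : FlowGraph V) (B R : V → V → Prop) : Prop :=
  ∀ v : V, ∀ p q : List V, IsWalk B G.s v p → IsWalk R G.s v q →
    ∀ x : V, x ∈ p → x ∈ q → G.Dom x v

/-- Spanning trees `B` and `R` of `G` rooted at `s` are strongly independent: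
for every pair of vertices `v`, `w`, either the path from `s` to `v` in `B` and
the path from `s` to `w` in `R` have in common only common dominators of `v`
and `w`, or the same holds with the roles of `B` and `R` exchanged. -/
def StronglyIndependent (G : FlowGraph V) (B R : V → V → Prop) : Prop :=
  ∀ v w : V,
    (∀ p q : List V, IsWalk B G.s v p → IsWalk R G.s w q →
      ∀ x : V, x ∈ p → x ∈ q → G.Dom x v ∧ G.Dom x w) ∨
    (∀ p q : List V, IsWalk R G.s v p → IsWalk B G.s w q →
      ∀ x : V, x ∈ p → x ∈ q → G.Dom x v ∧ G.Dom x w)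

/-- `IsDerivedArcOf G T v b a`: `(a, b)` is the derived arc of the arc `(v, b)`
of `G` with respect to `T`: `b` is not an ancestor of `v` in `T`, and `a = v`
if `v` is the parent of `b`, while otherwise `a` is the sibling of `b` in `T`
that is an ancestor of `v`. -/
def IsDerivedArcOf (G : FlowGraph V) (T : ParentTree V) (v b a : V) : Prop :=
  G.A v b ∧ ¬ T.Anc b v ∧
    ((v = T.parent b ∧ a = v) ∨
     (v ≠ T.parent b ∧ a ≠ T.root ∧ T.parent a = T.parent b ∧ T.Anc a v))

/-- The arc relation of the derived graph of `G` with respect to `T`. -/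
def DerivedArc (G : FlowGraph V) (T : ParentTree V) (a b : V) : Prop :=
  ∃ v : V, IsDerivedArcOf G T v b a

/-- `S` is the vertex set of a strongly connected subgraph of the digraph with
arc relation `A`. -/
def StronglyConnectedSet (A : V → V → Prop) (S : Set V) : Prop :=
  S.Nonempty ∧ ∀ u ∈ S, ∀ v ∈ S, ∃ p : List V,
    IsWalk A u v p ∧ ∀ x ∈ p, x ∈ S

/-- `G` is reducible: every strongly connected subgraph has a single entry
vertex, i.e. a vertex of the subgraph contained in every path from `s` to a
vertex of the subgraph. -/
def Reducible (G : FlowGraph V) : Prop :=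
  ∀ S : Set V, StronglyConnectedSet G.A S →
    ∃ v ∈ S, ∀ u ∈ S, ∀ p : List V, IsWalk G.A G.s u p → v ∈ p

/-- A digraph is acyclic if it has no cycle (a path from a vertex to itself
with at least one arc). -/
def Acyclic (A : V → V → Prop) : Prop :=
  ¬ ∃ (v : V) (p : List V), IsWalk A v v p ∧ 2 ≤ p.length

/-- `IsHighWalk A ν u v p`: `p` is a high path from `u` to `v`: a path all of
whose vertices other than `u` and `v` are greater (in the numbering `ν`) than
both `u` and `v`. -/
def IsHighWalk (A : V → V → Prop) (ν : V → ℕ) (u v : V) (p : List V) : Prop :=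
  IsWalk A u v p ∧ ∀ x ∈ p, x ≠ u → x ≠ v → ν u < ν x ∧ ν v < ν x

theorem isWalk_snoc {A : V → V → Prop} {s u v : V} {p : List V} (h : IsWalk A s u p)
    (a : A u v) : IsWalk A s v (p ++ [v]) := by
  obtain ⟨h1, h2, h3⟩ := h
  refine ⟨?_, ?_, ?_⟩
  · refine List.isChain_append.2 ⟨h1, by simp, ?_⟩
    intro x hx y hy
    rw [h3] at hx
    simp at hx hy
    subst hx hy
    exact a
  · simp [List.head?_append, h2]
  · simp

theorem ParentTree.anc_trans (T : ParentTree V) {x y z : V} (h : T.Anc x y) (k : T.Anc y z) :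
    T.Anc x z := by
  obtain ⟨n, rfl⟩ := h
  obtain ⟨m, rfl⟩ := k
  exact ⟨n + m, Function.iterate_add_apply _ _ _ _⟩

theorem ParentTree.anc_parent (T : ParentTree V) (x : V) : T.Anc (T.parent x) x := ⟨1, rfl⟩

theorem ParentTree.anc_cases (T : ParentTree V) {x y : V} (h : T.Anc x y) :
    x = y ∨ T.Anc x (T.parent y) := by
  obtain ⟨n, rfl⟩ := h
  cases n with
  | zero => left; rfl
  | succ n => right; exact ⟨n, rfl⟩

theorem ParentTree.anc_root (T : ParentTree V) {x : V} (h : T.Anc x T.root) : x = T.root := by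
  obtain ⟨n, rfl⟩ := h
  exact Function.iterate_fixed T.parent_root n

theorem ParentTree.parent_ne (T : ParentTree V) {x : V} (h : x ≠ T.root) : T.parent x ≠ x := by
  intro hx
  obtain ⟨n, hn⟩ := T.reaches_root x
  rw [Function.iterate_fixed hx n] at hn
  exact h hn

theorem anc_dom (G : FlowGraph V) (T : ParentTree V) (hroot : T.root = G.s)
    (hpp : ParentProperty G T) (p : List V) :
    ∀ v u : V, IsWalk G.A G.s v p → T.Anc u v → u ∈ p := by
  induction p using List.reverseRecOn with
  | nil => intro v u h; simp [IsWalk] at h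
  | append_singleton p a ih =>
    rintro v u ⟨h1, h2, h3⟩ hu
    simp at h3
    subst h3
    rcases T.anc_cases hu with rfl | hu'
    · simp
    rcases hp : p.getLast? with _ | b
    · rw [List.getLast?_eq_none_iff] at hp
      subst hp
      simp at h2
      subst h2
      rw [← hroot] at hu ⊢
      simp [T.anc_root hu]
    · have hne : p ≠ [] := by rintro rfl; simp at hp
      obtain ⟨c1, -, c2⟩ := List.isChain_append.1 h1
      have ab : G.A b a := c2 b (by simp [hp]) a (by simp)
      have hw : IsWalk G.A G.s b p := by
        refine ⟨c1, ?_, hp⟩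
        rwa [List.head?_append_of_ne_nil _ hne] at h2
      exact List.mem_append_left _ (ih b u hw (T.anc_trans hu' (hpp _ _ ab)))

theorem avoid_low (G : FlowGraph V) (T : ParentTree V) (hroot : T.root = G.s)
    (ord : V → ℕ) (hlh : LowHigh G T ord) (v : V) :
    ∀ n : ℕ, ∀ x : V, ord x = n → ord x < ord v → ∃ p, IsWalk G.A G.s x p ∧ v ∉ p := by
  obtain ⟨⟨inj, mono, -⟩, lh⟩ := hlh
  intro n
  induction n using Nat.strong_induction_on with
  | _ n ih =>
    rintro x rfl hx
    have hvx : v ≠ x := by rintro rfl; omega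
    by_cases hs : x = G.s
    · subst hs
      exact ⟨[G.s], ⟨List.isChain_singleton _, by simp, by simp⟩, by simpa using hvx⟩
    have key : ∃ y, G.A y x ∧ ord y < ord x := by
      rcases lh x hs with h | ⟨u, w, hu, -, hlt, -⟩
      · refine ⟨_, h, lt_of_le_of_ne (mono _ _ (T.anc_parent x)) ?_⟩
        intro he
        exact T.parent_ne (hroot ▸ hs) (inj he)
      · exact ⟨u, hu, hlt⟩
    obtain ⟨y, hy, hlt⟩ := key
    obtain ⟨p, hp, hv⟩ := ih (ord y) hlt y rfl (hlt.trans hx)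
    exact ⟨_, isWalk_snoc hp hy, by simp [hv, hvx]⟩

/-- `y` comes after `x` in the postorder associated with `ord`. -/
def PostGT (T : ParentTree V) (ord : V → ℕ) (y x : V) : Prop :=
  (T.Anc y x ∧ y ≠ x) ∨ (ord x < ord y ∧ ¬ T.Anc x y)

theorem postGT_trans (T : ParentTree V) (ord : V → ℕ) (h : IsTreePreorder T ord) (x y z : V)
    (hxy : PostGT T ord y x) (hyz : PostGT T ord z y) : PostGT T ord z x := by
  obtain ⟨inj, mono, cons⟩ := h
  have rfl' : ∀ a, T.Anc a a := fun a => ⟨0, rfl⟩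
  rcases hxy with ⟨h1, h2⟩ | ⟨h1, h2⟩ <;> rcases hyz with ⟨h3, h4⟩ | ⟨h3, h4⟩
  · refine Or.inl ⟨T.anc_trans h3 h1, ?_⟩
    rintro rfl
    exact h4 (inj (le_antisymm (mono _ _ h3) (mono _ _ h1)))
  · refine Or.inr ⟨?_, fun h => h4 (T.anc_trans h1 h)⟩
    by_contra hc
    exact h4 (cons y y z x (rfl' y) h1 h3.le (not_lt.1 hc))
  · by_cases hz : T.Anc z x
    · refine Or.inl ⟨hz, ?_⟩
      rintro rfl
      exact h2 h3
    · refine Or.inr ⟨?_, fun h => h2 (T.anc_trans h h3)⟩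
      by_contra hc
      exact hz (cons z z x y (rfl' z) h3 (not_lt.1 hc) h1.le)
  · exact Or.inr ⟨h1.trans h3, fun h => h2 (cons x x y z (rfl' x) h h1.le h3.le)⟩

theorem avoid [Fintype V] (G : FlowGraph V) (T : ParentTree V) (hroot : T.root = G.s)
    (ord : V → ℕ) (hlh : LowHigh G T ord) (v : V) :
    ∀ x : V, ¬ T.Anc v x → ∃ p, IsWalk G.A G.s x p ∧ v ∉ p := by
  have hpre := hlh.1
  have lh := hlh.2
  have wf : WellFounded (PostGT T ord) := by
    haveI : IsTrans V (PostGT T ord) :=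
      ⟨fun a b c hab hbc => postGT_trans T ord hpre c b a hbc hab⟩
    haveI : Std.Irrefl (PostGT T ord) := ⟨by
      rintro a (⟨-, h⟩ | ⟨h, -⟩)
      · exact h rfl
      · exact lt_irrefl _ h⟩
    exact Finite.wellFounded_of_trans_of_irrefl _
  intro x
  induction x using wf.induction with
  | _ x ih =>
    intro hx
    have hvx : v ≠ x := by rintro rfl; exact hx ⟨0, rfl⟩
    by_cases hs : x = G.s
    · subst hs
      exact ⟨[G.s], ⟨List.isChain_singleton _, by simp, by simp⟩, by simpa using hvx⟩
    rcases lt_trichotomy (ord x) (ord v) with hlt | heq | hgt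
    · exact avoid_low G T hroot ord hlh v _ x rfl hlt
    · exact absurd (hpre.1 heq).symm hvx
    have key : ∃ y, G.A y x ∧ PostGT T ord y x ∧ ¬ T.Anc v y := by
      rcases lh x hs with h | ⟨u, w, -, hw, -, hlt, hn⟩
      · exact ⟨_, h, Or.inl ⟨T.anc_parent x, T.parent_ne (hroot ▸ hs)⟩,
          fun h => hx (T.anc_trans h (T.anc_parent x))⟩
      · exact ⟨w, hw, Or.inr ⟨hlt, hn⟩,
          fun h => hx (hpre.2.2 v v x w ⟨0, rfl⟩ h hgt.le hlt.le)⟩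
    obtain ⟨y, hy, hgt', hvy⟩ := key
    obtain ⟨p, hp, hv⟩ := ih y hgt' hvy
    exact ⟨_, isWalk_snoc hp hy, by simp [hv, hvx]⟩

/-- If `T` has the parent property and there exists a low-high order of `T` on
`G`, then `T` has the sibling property, and hence `T` is the dominator tree of
`G`. -/
theorem stmt7 [Fintype V] (G : FlowGraph V) (T : ParentTree V)
    (hroot : T.root = G.s) (hpp : ParentProperty G T)
    (hlh : ∃ ord : V → ℕ, LowHigh G T ord) :
    SiblingProperty G T ∧ IsDomTree G T := by
  obtain ⟨ord, hlh⟩ := hlh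
  have domAnc : ∀ u v, DomOn G.A G.s u v → T.Anc u v := by
    intro u v h
    by_contra hn
    obtain ⟨p, hp, hu⟩ := avoid G T hroot ord hlh u v hn
    exact hu (h p hp)
  refine ⟨?_, hroot, ?_⟩
  · intro v w hv _ hne hpar hdom
    rcases T.anc_cases (domAnc v w hdom) with h | h
    · exact hne h
    · rw [← hpar] at h
      exact T.parent_ne hv
        (hlh.1.1 (le_antisymm (hlh.1.2.1 _ _ (T.anc_parent v)) (hlh.1.2.1 _ _ h)))
  · intro v hv
    refine ⟨fun p hp => anc_dom G T hroot hpp p v _ hp (T.anc_parent v),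
      T.parent_ne (hroot ▸ hv), ?_⟩
    intro u hu hne p hp
    rcases T.anc_cases (domAnc u v hu) with h | h
    · exact absurd h hne
    · exact anc_dom G T hroot hpp p _ _ hp h
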